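/- arXiv:2602.19385 — 2 statements merged into one kernel-verified Lean document; each statement's English description precedes it below -/
import Mathlib

section
/- Convergence of biased gradient descent (Theorem 1): Let d ≥ 1 and let L : ℝ^d → ℝ be a nonnegative differentiable function whose gradient is β-Lipschitz for some β > 0, i.e. ‖∇L(w) − ∇L(w')‖ ≤ β‖w − w'‖ for all w, w'. Let (w_t)_{t≥1} be generated by w_{t+1} = w_t − η_t g_t, where g_t ∈ ℝ^d are arbitrary descent vectors and the step sizes satisfy 0 < η_t ≤ 1/β. Define the gradient shifting δ_t² = ‖g_t − ∇L(w_t)‖². Then for every T ≥ 1, min_{1 ≤ t ≤ T} ‖∇L(w_t)‖² ≤ 2 L(w_1) / (∑_{t=1}^T η_t) + (∑_{t=1}^T η_t δ_t²) / (∑_{t=1}^T η_t). -/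
open Finset

/-!
The descent lemma for a function with `β`-Lipschitz gradient, together with `η ≤ 1 / β` and the
polarization identity `‖g‖² - 2⟪∇L, g⟫ = ‖g - ∇L‖² - ‖∇L‖²`, shows that one step satisfies
`η ‖∇L(w)‖² ≤ 2 (L(w) - L(w - η g)) + η ‖g - ∇L(w)‖²`. Summing telescopes the loss values, and
nonnegativity of `L` bounds the `η`-weighted sum of `‖∇L(w_t)‖²`. If every `‖∇L(w_t)‖²` exceeded
the claimed bound, so would their weighted average.
-/

/-- Descent lemma: a function with `β`-Lipschitz gradient lies below its quadratic upper model. -/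
lemma descent_lemma {E : Type*} [NormedAddCommGroup E] [InnerProductSpace ℝ E] [CompleteSpace E]
    {L : E → ℝ} {β : ℝ} (hL : Differentiable ℝ L)
    (hs : ∀ w w', ‖gradient L w - gradient L w'‖ ≤ β * ‖w - w'‖) (x v : E) :
    L (x + v) ≤ L x + inner ℝ (gradient L x) v + β / 2 * ‖v‖ ^ 2 := by
  -- Compare derivatives in `s` of `L (x + s v)` and of its quadratic model on `[0, 1]`.
  have hf : ∀ s : ℝ, HasDerivAt (fun s : ℝ => L (x + s • v))
      (inner ℝ (gradient L (x + s • v)) v) s := by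
    intro s
    have h1 : HasDerivAt (fun s : ℝ => x + s • v) v s := by
      simpa using ((hasDerivAt_id s).smul_const v).const_add x
    have h2 := (hL (x + s • v)).hasGradientAt.hasFDerivAt.comp_hasDerivAt s h1
    exact h2
  have hB : ∀ s : ℝ, HasDerivAt
      (fun s : ℝ => L x + s * inner ℝ (gradient L x) v + β / 2 * ‖v‖ ^ 2 * s ^ 2)
      (inner ℝ (gradient L x) v + β * ‖v‖ ^ 2 * s) s := by
    intro s
    have h := (((hasDerivAt_id s).mul_const (inner ℝ (gradient L x) v)).const_add (L x)).add
      ((hasDerivAt_pow 2 s).const_mul (β / 2 * ‖v‖ ^ 2))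
    exact h.congr_deriv (by push_cast; ring)
  have key := image_le_of_deriv_right_le_deriv_boundary (a := 0) (b := 1)
    (fun s _ => (hf s).continuousAt.continuousWithinAt)
    (fun s _ => (hf s).hasDerivWithinAt) (by simp)
    (fun s _ => (hB s).continuousAt.continuousWithinAt)
    (fun s _ => (hB s).hasDerivWithinAt)
    (fun s hs' => by
      have h1 : inner ℝ (gradient L (x + s • v) - gradient L x) v
          ≤ ‖gradient L (x + s • v) - gradient L x‖ * ‖v‖ := real_inner_le_norm _ _
      have h2 := hs (x + s • v) x
      rw [add_sub_cancel_left, norm_smul, Real.norm_of_nonneg hs'.1] at h2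
      have h3 := mul_le_mul_of_nonneg_right h2 (norm_nonneg v)
      rw [inner_sub_left] at h1
      nlinarith)
    (Set.right_mem_Icc.mpr zero_le_one)
  simpa using key

/-- Progress of a single biased gradient step of size at most `1 / β`. -/
lemma biased_step {E : Type*} [NormedAddCommGroup E] [InnerProductSpace ℝ E] [CompleteSpace E]
    {L : E → ℝ} {β η : ℝ} (hβ : 0 < β) (hL : Differentiable ℝ L)
    (hs : ∀ w w', ‖gradient L w - gradient L w'‖ ≤ β * ‖w - w'‖)
    (hη : 0 < η) (hηβ : η ≤ 1 / β) (x g : E) :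
    η * ‖gradient L x‖ ^ 2 ≤
      2 * (L x - L (x - η • g)) + η * ‖g - gradient L x‖ ^ 2 := by
  have h := descent_lemma hL hs x (-(η • g))
  rw [← sub_eq_add_neg, inner_neg_right, inner_smul_right, norm_neg, norm_smul,
    Real.norm_of_nonneg hη.le] at h
  have h1 : η * β ≤ 1 := (le_div_iff₀ hβ).mp hηβ
  have h2 : η * β * (η * ‖g‖ ^ 2) ≤ 1 * (η * ‖g‖ ^ 2) :=
    mul_le_mul_of_nonneg_right h1 (by positivity)
  rw [norm_sub_sq_real, real_inner_comm]
  nlinarith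

/-- Convergence of biased gradient descent (Theorem 1). -/
theorem biased_gd_convergence {d : ℕ} (hd : 1 ≤ d)
    (L : EuclideanSpace ℝ (Fin d) → ℝ) (β : ℝ) (hβ : 0 < β)
    (hL0 : ∀ w, 0 ≤ L w) (hLdiff : Differentiable ℝ L)
    (hLsmooth : ∀ w w', ‖gradient L w - gradient L w'‖ ≤ β * ‖w - w'‖)
    (w g : ℕ → EuclideanSpace ℝ (Fin d)) (η : ℕ → ℝ)
    (hη : ∀ t, 0 < η t) (hηβ : ∀ t, η t ≤ 1 / β)
    (hupd : ∀ t, 1 ≤ t → w (t + 1) = w t - η t • g t)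
    (T : ℕ) (hT : 1 ≤ T) :
    ∃ t ∈ Finset.Icc 1 T,
      ‖gradient L (w t)‖ ^ 2 ≤
        2 * L (w 1) / (∑ s ∈ Finset.Icc 1 T, η s) +
          (∑ s ∈ Finset.Icc 1 T, η s * ‖g s - gradient L (w s)‖ ^ 2) /
            (∑ s ∈ Finset.Icc 1 T, η s) := by
  have hsum : ∀ n : ℕ, ∑ s ∈ Finset.Icc 1 n, η s * ‖gradient L (w s)‖ ^ 2 ≤
      2 * (L (w 1) - L (w (n + 1))) +
        ∑ s ∈ Finset.Icc 1 n, η s * ‖g s - gradient L (w s)‖ ^ 2 := by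
    intro n
    induction n with
    | zero => simp
    | succ n ih =>
      rw [Finset.sum_Icc_succ_top (by omega), Finset.sum_Icc_succ_top (by omega)]
      have h := biased_step hβ hLdiff hLsmooth (hη (n + 1)) (hηβ (n + 1)) (w (n + 1)) (g (n + 1))
      rw [← hupd (n + 1) (by omega)] at h
      linarith
  have hne : (Finset.Icc 1 T).Nonempty := Finset.nonempty_Icc.mpr hT
  have hpos : 0 < ∑ s ∈ Finset.Icc 1 T, η s := Finset.sum_pos (fun s _ => hη s) hne
  rw [← add_div]
  by_contra! hcon
  have hlt := Finset.sum_lt_sum_of_nonempty hne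
    (fun s hs => mul_lt_mul_of_pos_left (hcon s hs) (hη s))
  rw [← Finset.sum_mul, mul_div_cancel₀ _ hpos.ne'] at hlt
  linarith [hsum T, hL0 (w (T + 1))]
end

section
/- Estimation error of the squared gradient shifting: Let d ≥ 1 and G > 0, let a, â, b, c, ĉ ∈ ℝ^d all have ‖·‖_∞ ≤ G, and let n ≥ 0 be real. Define δ̂ = ‖ (1/(n+1)) â + (n/(n+1)) b − ĉ ‖₂ and δ = ‖ (1/(n+1)) a + (n/(n+1)) b − c ‖₂. Then | δ̂² − δ² | ≤ 4 √d G · ( (1/(n+1)) ‖ â − a ‖₂ + ‖ ĉ − c ‖₂ ). -/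
/-!
Write `u` and `v` for the empirical and the true shift vector. The factorization
`‖u‖ ^ 2 - ‖v‖ ^ 2 = (‖u‖ - ‖v‖) * (‖u‖ + ‖v‖)` and the reverse triangle inequality bound the
left side by `‖u - v‖ * (‖u‖ + ‖v‖)`. The term in `b` cancels in `u - v`, and each of `u`, `v` is
a convex combination of vectors of norm at most `√d * G` minus another such vector, hence has
norm at most `2 * √d * G` (`norm_shift_le`).
-/

lemma norm_le_sqrt_mul_of_abs_le {d : ℕ} {G : ℝ} (hG : 0 ≤ G) (x : EuclideanSpace ℝ (Fin d))
    (hx : ∀ j, |x j| ≤ G) : ‖x‖ ≤ Real.sqrt d * G := by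
  rw [EuclideanSpace.norm_eq]
  apply Real.sqrt_le_iff.2
  refine ⟨by positivity, ?_⟩
  rw [mul_pow, Real.sq_sqrt (Nat.cast_nonneg d)]
  calc ∑ j, ‖x j‖ ^ 2 ≤ ∑ _j : Fin d, G ^ 2 :=
        Finset.sum_le_sum fun j _ => pow_le_pow_left₀ (norm_nonneg _) (hx j) 2
    _ = d * G ^ 2 := by simp

lemma norm_shift_le {E : Type*} [NormedAddCommGroup E] [NormedSpace ℝ E] {R n : ℝ} (hn : 0 ≤ n)
    {x y z : E} (hx : ‖x‖ ≤ R) (hy : ‖y‖ ≤ R) (hz : ‖z‖ ≤ R) :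
    ‖(1 / (n + 1)) • x + (n / (n + 1)) • y - z‖ ≤ 2 * R := by
  have hs : 0 ≤ 1 / (n + 1) := by positivity
  have ht : 0 ≤ n / (n + 1) := by positivity
  have hst : 1 / (n + 1) + n / (n + 1) = 1 := by field_simp; ring
  calc ‖(1 / (n + 1)) • x + (n / (n + 1)) • y - z‖
      ≤ ‖(1 / (n + 1)) • x‖ + ‖(n / (n + 1)) • y‖ + ‖z‖ :=
        (norm_sub_le _ _).trans (add_le_add_left (norm_add_le _ _) _)
    _ = 1 / (n + 1) * ‖x‖ + n / (n + 1) * ‖y‖ + ‖z‖ := by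
        rw [norm_smul_of_nonneg hs, norm_smul_of_nonneg ht]
    _ ≤ 1 / (n + 1) * R + n / (n + 1) * R + R := by gcongr
    _ = 2 * R := by rw [← add_mul, hst]; ring

/-- Estimation error of the squared gradient shifting. -/
theorem sq_gradient_shifting_estimation_error {d : ℕ} (hd : 1 ≤ d)
    (G : ℝ) (hG : 0 < G) (a ahat b c chat : EuclideanSpace ℝ (Fin d))
    (ha : ∀ j, |a j| ≤ G) (hahat : ∀ j, |ahat j| ≤ G) (hb : ∀ j, |b j| ≤ G)
    (hc : ∀ j, |c j| ≤ G) (hchat : ∀ j, |chat j| ≤ G)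
    (n : ℝ) (hn : 0 ≤ n) :
    |‖(1 / (n + 1)) • ahat + (n / (n + 1)) • b - chat‖ ^ 2 -
        ‖(1 / (n + 1)) • a + (n / (n + 1)) • b - c‖ ^ 2| ≤
      4 * Real.sqrt d * G * ((1 / (n + 1)) * ‖ahat - a‖ + ‖chat - c‖) := by
  have hR := norm_le_sqrt_mul_of_abs_le (d := d) hG.le
  have hu := norm_shift_le hn (hR _ hahat) (hR _ hb) (hR _ hchat)
  have hv := norm_shift_le hn (hR _ ha) (hR _ hb) (hR _ hc)
  have huv : ‖((1 / (n + 1)) • ahat + (n / (n + 1)) • b - chat) -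
      ((1 / (n + 1)) • a + (n / (n + 1)) • b - c)‖ ≤
      (1 / (n + 1)) * ‖ahat - a‖ + ‖chat - c‖ := by
    have hs : 0 ≤ 1 / (n + 1) := by positivity
    rw [← norm_smul_of_nonneg hs]
    refine le_of_eq_of_le (congrArg norm ?_)
      (norm_sub_le ((1 / (n + 1)) • (ahat - a)) (chat - c))
    module
  set u := (1 / (n + 1)) • ahat + (n / (n + 1)) • b - chat
  set v := (1 / (n + 1)) • a + (n / (n + 1)) • b - c
  have hsum : ‖u‖ + ‖v‖ ≤ 4 * Real.sqrt d * G := by linarith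
  rw [sq_sub_sq, abs_mul, abs_of_nonneg (by positivity : 0 ≤ ‖u‖ + ‖v‖)]
  exact mul_le_mul hsum ((abs_norm_sub_norm_le u v).trans huv) (abs_nonneg _) (by positivity)
end
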